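/- For every ω₀ ∈ Ω, the evaluation map ev : Ind_Ω A → A, ξ ↦ ξ(ω₀), is a surjective bounded linear map of operator norm at most 1, and its kernel equals the closed linear span of the set of functions ω ↦ γ(q(ω)) ξ(ω), where γ ranges over continuous functions Ω/H → ℂ vanishing at infinity with γ(q(ω₀)) = 0 and ξ ranges over Ind_Ω A. -/

import Mathlib

/-!
Write `q : Ω → Ω/H` for the quotient map.

*Surjectivity.*  Since the action is free and its structure map `(ω, h) ↦ (ω • h, ω)` is closed,
the image of `Ω × {h ≠ 1}` is a closed set missing `(ω₀, ω₀)`, so `ω₀` has a neighbourhood `U`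
meeting each orbit at most once (`exists_slice`).  Given `a : A` and a bump function `f` at `ω₀`
supported in a compact `K ⊆ U`, the function `ω ↦ ∑_h f(ω • h) (h • a)`, a sum with at most one
nonzero term, is equivariant and takes the value `a` at `ω₀`.  It is continuous on each translate of
`U`, and zero off `q⁻¹(q(K))`, which is closed because `Ω/H` is Hausdorff (`t2Space_orbits`).

*Kernel.*  The kernel is a closed subspace containing the products `(γ ∘ q) ξ` with `γ(q ω₀) = 0`.
Conversely, if `ξ ω₀ = 0`, then `n(q ω) = ‖ξ ω‖` is a well-defined element of `C₀(Ω/H)`, so for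
every `ε > 0` the function `γ = n / (n + ε)` is in `C₀(Ω/H)` and vanishes at `q ω₀`, while
`‖ξ - (γ ∘ q) ξ‖ = sup (ε n / (n + ε)) ≤ ε`.
-/


open scoped BoundedContinuousFunction ZeroAtInfty

/-- The orbit relation of a right action `act : Ω → H → Ω`:
`ω ~ ω'` iff `ω' = ω • h` for some `h ∈ H`.  The orbit space `Ω/H` is `Quot (orbitRel act)`,
equipped with the quotient topology, and the quotient map is `Quot.mk (orbitRel act)`. -/
def orbitRel {Ω H : Type*} (act : Ω → H → Ω) : Ω → Ω → Prop :=
  fun ω ω' => ∃ h : H, act ω h = ω'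

/-- `act : Ω → H → Ω` is a continuous, free and proper right action of the discrete group `H`
on the space `Ω`. -/
structure IsFreeProperAction {Ω H : Type*} [TopologicalSpace Ω] [TopologicalSpace H] [Group H]
    (act : Ω → H → Ω) : Prop where
  act_one : ∀ ω, act ω 1 = ω
  act_mul : ∀ ω (h h' : H), act (act ω h) h' = act ω (h * h')
  continuous : Continuous fun p : Ω × H => act p.1 p.2
  free : ∀ ω (h : H), act ω h = ω → h = 1
  proper : IsProperMap fun p : Ω × H => (act p.1 p.2, p.1)

/-- `π : H → A → A` is a left action of the group `H` on the normed space `A` by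
complex-linear isometric isomorphisms. -/
structure IsIsometricAction {H A : Type*} [Group H] [NormedAddCommGroup A] [NormedSpace ℂ A]
    (π : H → A → A) : Prop where
  act_one : ∀ a, π 1 a = a
  act_mul : ∀ (h h' : H) a, π (h * h') a = π h (π h' a)
  map_add : ∀ (h : H) (a b : A), π h (a + b) = π h a + π h b
  map_smul : ∀ (h : H) (c : ℂ) (a : A), π h (c • a) = c • π h a
  norm_map : ∀ (h : H) (a : A), ‖π h a‖ = ‖a‖

/-- The induced Banach space `Ind_Ω A` of an étale correspondence, specialized to a discrete
group `H`: the set of bounded continuous functions `ξ : Ω → A` that are `H`-equivariant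
(`ξ (ω • h) = h⁻¹ • ξ ω`) and whose norm function vanishes at infinity relative to the orbit
space `Ω/H`.  It is regarded as a subset of the Banach space `Ω →ᵇ A` of bounded continuous
functions with the supremum norm. -/
def IndSet {H Ω A : Type*} [Group H] [TopologicalSpace Ω] [NormedAddCommGroup A]
    (act : Ω → H → Ω) (π : H → A → A) : Set (Ω →ᵇ A) :=
  {ξ | (∀ ω (h : H), ξ (act ω h) = π h⁻¹ (ξ ω)) ∧
    ∀ ε : ℝ, 0 < ε → ∃ K : Set (Quot (orbitRel act)), IsCompact K ∧
      ∀ ω, Quot.mk (orbitRel act) ω ∉ K → ‖ξ ω‖ < ε}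

open Set Filter Topology

/-! ### The orbit space of a free and proper action -/

lemma mk_act {H Ω : Type*} {act : Ω → H → Ω} (ω : Ω) (h : H) :
    Quot.mk (orbitRel act) (act ω h) = Quot.mk (orbitRel act) ω :=
  (Quot.sound ⟨h, rfl⟩).symm

section Action

variable {H Ω : Type*} [Group H] [TopologicalSpace H] [TopologicalSpace Ω] {act : Ω → H → Ω}

lemma IsFreeProperAction.act_inv (hact : IsFreeProperAction act) (ω : Ω) (h : H) :
    act (act ω h) h⁻¹ = ω := by
  rw [hact.act_mul, mul_inv_cancel, hact.act_one]

lemma mk_eq_mk_iff (hact : IsFreeProperAction act) (ω ω' : Ω) :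
    Quot.mk (orbitRel act) ω = Quot.mk (orbitRel act) ω' ↔ ∃ h, act ω h = ω' := by
  refine ⟨fun e => ?_, fun e => Quot.sound e⟩
  have e' := Quot.eqvGen_exact e
  clear e
  induction e' with
  | rel x y h => exact h
  | refl x => exact ⟨1, hact.act_one x⟩
  | symm x y _ ih =>
    obtain ⟨h, rfl⟩ := ih
    exact ⟨h⁻¹, hact.act_inv x h⟩
  | trans x y z _ _ ih1 ih2 =>
    obtain ⟨h, rfl⟩ := ih1
    obtain ⟨k, rfl⟩ := ih2
    exact ⟨h * k, (hact.act_mul _ _ _).symm⟩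

lemma IsFreeProperAction.continuous_act (hact : IsFreeProperAction act) (h : H) :
    Continuous fun ω => act ω h :=
  hact.continuous.comp (Continuous.prodMk_left h)

lemma isOpenQuotientMap_mk (hact : IsFreeProperAction act) :
    IsOpenQuotientMap (Quot.mk (orbitRel act)) := by
  refine ⟨Quot.mk_surjective, continuous_quot_mk, fun U hU => ?_⟩
  rw [← isQuotientMap_quot_mk.isOpen_preimage]
  -- the saturation of `U` is the union of its translates
  have : Quot.mk (orbitRel act) ⁻¹' (Quot.mk (orbitRel act) '' U) =
      ⋃ h : H, (fun ω => act ω h) ⁻¹' U := by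
    ext ω
    simp only [mem_preimage, mem_image, mem_iUnion]
    constructor
    · rintro ⟨u, hu, e⟩
      obtain ⟨h, rfl⟩ := (mk_eq_mk_iff hact _ _).1 e.symm
      exact ⟨h, hu⟩
    · rintro ⟨h, hh⟩
      exact ⟨_, hh, mk_act ω h⟩
  rw [this]
  exact isOpen_iUnion fun h => hU.preimage (hact.continuous_act h)

lemma t2Space_orbits (hact : IsFreeProperAction act) : T2Space (Quot (orbitRel act)) := by
  rw [t2Space_iff_of_isOpenQuotientMap (isOpenQuotientMap_mk hact)]
  convert hact.proper.isClosedMap.isClosed_range using 1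
  ext ⟨x, y⟩
  simp only [mem_ofPred_eq, mem_range, Prod.exists, Prod.mk.injEq]
  rw [eq_comm, mk_eq_mk_iff hact]
  constructor
  · rintro ⟨h, rfl⟩
    exact ⟨y, h, rfl, rfl⟩
  · rintro ⟨_, h, e, rfl⟩
    exact ⟨h, e⟩

/-- Every point has an open neighbourhood on which the quotient map to the orbit space is
injective, expressed through the return times `h` to that neighbourhood. -/
lemma exists_slice [DiscreteTopology H] (hact : IsFreeProperAction act) (ω₀ : Ω) :
    ∃ U : Set Ω, IsOpen U ∧ ω₀ ∈ U ∧ ∀ ω ∈ U, ∀ h, act ω h ∈ U → h = 1 := by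
  have hcl := hact.proper.isClosedMap ((univ : Set Ω) ×ˢ ({1}ᶜ : Set H))
    (isClosed_univ.prod (isClosed_discrete _))
  have hmem : (ω₀, ω₀) ∉ (fun p : Ω × H => (act p.1 p.2, p.1)) '' (univ ×ˢ {1}ᶜ) := by
    rintro ⟨⟨ω, h⟩, hh, e⟩
    simp only [Prod.mk.injEq] at e
    obtain ⟨e, rfl⟩ := e
    exact hh.2 (hact.free _ _ e)
  obtain ⟨U, V, hU, hV, h1, h2, hUV⟩ := isOpen_prod_iff.1 hcl.isOpen_compl ω₀ ω₀ hmem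
  refine ⟨U ∩ V, hU.inter hV, ⟨h1, h2⟩, fun ω hω h hh => ?_⟩
  by_contra hne
  exact hUV (mk_mem_prod hh.1 hω.2) ⟨(ω, h), ⟨mem_univ _, hne⟩, rfl⟩

end Action

/-! ### The induced space and the kernel of evaluation -/

section Isometric

variable {H A : Type*} [Group H] [NormedAddCommGroup A] [NormedSpace ℂ A] {π : H → A → A}

lemma IsIsometricAction.map_zero (hπ : IsIsometricAction π) (h : H) : π h 0 = 0 := by
  rw [← norm_eq_zero, hπ.norm_map, norm_zero]

lemma IsIsometricAction.continuous (hπ : IsIsometricAction π) (h : H) : Continuous (π h) := by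
  refine (AddMonoidHomClass.isometry_of_norm (AddMonoidHom.mk' (π h) (hπ.map_add h)) ?_).continuous
  exact hπ.norm_map h

end Isometric

section Induced

variable {H Ω A : Type*} [Group H] [TopologicalSpace Ω] [NormedAddCommGroup A] [NormedSpace ℂ A]
  {act : Ω → H → Ω} {π : H → A → A}

/-- Multiplication by a bounded function on the orbit space preserves the induced space. -/
lemma mul_mem_indSet (hπ : IsIsometricAction π) {ξ ζ : Ω →ᵇ A} (hξ : ξ ∈ IndSet act π)
    (g : Quot (orbitRel act) → ℂ) (M : ℝ) (hM : ∀ x, ‖g x‖ ≤ M)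
    (hζ : ∀ ω, ζ ω = g (Quot.mk (orbitRel act) ω) • ξ ω) : ζ ∈ IndSet act π := by
  refine ⟨fun ω h => ?_, fun ε hε => ?_⟩
  · rw [hζ, hζ, mk_act, hξ.1, hπ.map_smul]
  · have hM' : 0 < |M| + 1 := by positivity
    obtain ⟨K, hK, h⟩ := hξ.2 (ε / (|M| + 1)) (by positivity)
    refine ⟨K, hK, fun ω hω => ?_⟩
    have h1 := h ω hω
    rw [lt_div_iff₀ hM'] at h1
    rw [hζ, norm_smul]
    have h2 := (hM (Quot.mk _ ω)).trans (le_abs_self M)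
    nlinarith [norm_nonneg (ξ ω)]

/-- The kernel of evaluation at `ω₀` on the induced space, as a subspace of `Ω →ᵇ A`. -/
def evalKer (act : Ω → H → Ω) (hπ : IsIsometricAction π) (ω₀ : Ω) : Submodule ℂ (Ω →ᵇ A) where
  carrier := {ξ | ξ ∈ IndSet act π ∧ ξ ω₀ = 0}
  zero_mem' := ⟨⟨fun _ _ => (hπ.map_zero _).symm,
    fun ε hε => ⟨∅, isCompact_empty, fun ω _ => by simpa using hε⟩⟩, rfl⟩
  add_mem' := by
    rintro ξ η ⟨hξ, hξ0⟩ ⟨hη, hη0⟩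
    refine ⟨⟨fun ω h => ?_, fun ε hε => ?_⟩, ?_⟩
    · simp [hξ.1, hη.1, hπ.map_add]
    · obtain ⟨K, hK, h⟩ := hξ.2 (ε / 2) (half_pos hε)
      obtain ⟨L, hL, h'⟩ := hη.2 (ε / 2) (half_pos hε)
      refine ⟨K ∪ L, hK.union hL, fun ω hω => ?_⟩
      have h1 := h ω fun hk => hω (Or.inl hk)
      have h2 := h' ω fun hk => hω (Or.inr hk)
      have h3 := norm_add_le (ξ ω) (η ω)
      rw [BoundedContinuousFunction.add_apply]
      linarith
    · simp [hξ0, hη0]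
  smul_mem' := by
    rintro c ξ ⟨hξ, hξ0⟩
    exact ⟨mul_mem_indSet hπ hξ (fun _ => c) ‖c‖ (fun _ => le_rfl) (fun _ => rfl), by simp [hξ0]⟩

lemma isClosed_indSet (hπ : IsIsometricAction π) : IsClosed (IndSet act π) := by
  refine isClosed_of_closure_subset fun ξ hξ => ⟨fun ω h => ?_, fun ε hε => ?_⟩
  · have hc : IsClosed {ξ : Ω →ᵇ A | ξ (act ω h) = π h⁻¹ (ξ ω)} :=
      isClosed_eq (continuous_eval_const _)
        ((hπ.continuous _).comp (continuous_eval_const _))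
    exact closure_minimal (fun η hη => hη.1 ω h) hc hξ
  · obtain ⟨η, hη, hd⟩ := Metric.mem_closure_iff.1 hξ (ε / 2) (half_pos hε)
    obtain ⟨K, hK, h⟩ := hη.2 (ε / 2) (half_pos hε)
    refine ⟨K, hK, fun ω hω => ?_⟩
    have h1 := h ω hω
    have h2 := BoundedContinuousFunction.dist_coe_le_dist (f := ξ) (g := η) ω
    rw [dist_eq_norm] at h2
    have h3 := norm_le_norm_add_norm_sub (η ω) (ξ ω)
    rw [norm_sub_rev] at h3
    linarith

lemma isClosed_evalKer (hπ : IsIsometricAction π) (ω₀ : Ω) :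
    IsClosed (evalKer act hπ ω₀ : Set (Ω →ᵇ A)) :=
  (isClosed_indSet hπ).inter
    (isClosed_eq (continuous_eval_const ω₀) continuous_const)

/-! ### Approximation of an element of the induced space by its multiples -/

/-- The norm of an element of the induced space, as a function on the orbit space. -/
def orbitNorm (hπ : IsIsometricAction π) (ξ : Ω →ᵇ A) (hξ : ξ ∈ IndSet act π) :
    Quot (orbitRel act) → ℝ :=
  Quot.lift (fun ω => ‖ξ ω‖) (by
    rintro ω _ ⟨h, rfl⟩
    simp only [hξ.1, hπ.norm_map])

lemma continuous_orbitNorm (hπ : IsIsometricAction π) (ξ : Ω →ᵇ A) (hξ : ξ ∈ IndSet act π) :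
    Continuous (orbitNorm hπ ξ hξ) :=
  continuous_quot_lift _ ξ.continuous.norm

lemma orbitNorm_nonneg (hπ : IsIsometricAction π) (ξ : Ω →ᵇ A) (hξ : ξ ∈ IndSet act π)
    (x : Quot (orbitRel act)) : 0 ≤ orbitNorm hπ ξ hξ x := by
  induction x using Quot.ind
  exact norm_nonneg _

lemma tendsto_orbitNorm (hπ : IsIsometricAction π) (ξ : Ω →ᵇ A) (hξ : ξ ∈ IndSet act π) :
    Tendsto (orbitNorm hπ ξ hξ) (cocompact _) (𝓝 0) := by
  rw [Metric.tendsto_nhds]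
  intro ε hε
  obtain ⟨K, hK, h⟩ := hξ.2 ε hε
  filter_upwards [hK.compl_mem_cocompact] with x hx
  rw [Real.dist_0_eq_abs, abs_of_nonneg (orbitNorm_nonneg hπ ξ hξ x)]
  induction x using Quot.ind
  exact h _ hx

/-- The function `n / (n + ε)` on the orbit space, where `n` is the orbit norm of `ξ`. -/
noncomputable def cutoff (hπ : IsIsometricAction π) (ξ : Ω →ᵇ A) (hξ : ξ ∈ IndSet act π)
    (ε : ℝ) (hε : 0 < ε) : C₀(Quot (orbitRel act), ℂ) where
  toFun x := ((orbitNorm hπ ξ hξ x / (orbitNorm hπ ξ hξ x + ε) : ℝ) : ℂ)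
  continuous_toFun := Complex.continuous_ofReal.comp <|
    (continuous_orbitNorm hπ ξ hξ).div ((continuous_orbitNorm hπ ξ hξ).add continuous_const)
      fun x => (add_pos_of_nonneg_of_pos (orbitNorm_nonneg hπ ξ hξ x) hε).ne'
  zero_at_infty' := by
    have h := tendsto_orbitNorm hπ ξ hξ
    have h1 := h.div (h.add_const ε) (by simpa using hε.ne')
    rw [zero_div] at h1
    have h2 := (Complex.continuous_ofReal.tendsto 0).comp h1
    rwa [Complex.ofReal_zero] at h2

lemma cutoff_mk (hπ : IsIsometricAction π) (ξ : Ω →ᵇ A) (hξ : ξ ∈ IndSet act π)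
    (ε : ℝ) (hε : 0 < ε) (ω : Ω) :
    cutoff hπ ξ hξ ε hε (Quot.mk _ ω) = ((‖ξ ω‖ / (‖ξ ω‖ + ε) : ℝ) : ℂ) := rfl

lemma norm_cutoff_le (hπ : IsIsometricAction π) (ξ : Ω →ᵇ A) (hξ : ξ ∈ IndSet act π)
    (ε : ℝ) (hε : 0 < ε) (ω : Ω) : ‖cutoff hπ ξ hξ ε hε (Quot.mk _ ω)‖ ≤ 1 := by
  rw [cutoff_mk, Complex.norm_real, Real.norm_of_nonneg (by positivity)]
  exact div_le_one_of_le₀ (by linarith) (by positivity)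

lemma norm_sub_cutoff_le (hπ : IsIsometricAction π) (ξ : Ω →ᵇ A) (hξ : ξ ∈ IndSet act π)
    (ε : ℝ) (hε : 0 < ε) (ω : Ω) :
    ‖ξ ω - cutoff hπ ξ hξ ε hε (Quot.mk _ ω) • ξ ω‖ ≤ ε := by
  have hp : 0 < ‖ξ ω‖ + ε := by positivity
  have e : ξ ω - cutoff hπ ξ hξ ε hε (Quot.mk _ ω) • ξ ω =
      ((ε / (‖ξ ω‖ + ε) : ℝ) : ℂ) • ξ ω := by
    have : ε / (‖ξ ω‖ + ε) = 1 - ‖ξ ω‖ / (‖ξ ω‖ + ε) := by field_simp; ring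
    rw [this, cutoff_mk, Complex.ofReal_sub, sub_smul, Complex.ofReal_one, one_smul]
  rw [e, norm_smul, Complex.norm_real, Real.norm_of_nonneg (by positivity), div_mul_eq_mul_div,
    div_le_iff₀ hp]
  nlinarith [norm_nonneg (ξ ω)]

end Induced

/-! ### Surjectivity of evaluation -/

/-- Evaluation at `ω₀` maps the induced space onto `A`. -/
lemma exists_mem_indSet_eval_eq
    {H : Type*} [Group H] [TopologicalSpace H] [DiscreteTopology H]
    {Ω : Type*} [TopologicalSpace Ω] [LocallyCompactSpace Ω] [T2Space Ω]
    {A : Type*} [NormedAddCommGroup A] [NormedSpace ℂ A]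
    {act : Ω → H → Ω} (hact : IsFreeProperAction act)
    {π : H → A → A} (hπ : IsIsometricAction π) (ω₀ : Ω) (a : A) :
    ∃ ξ ∈ IndSet act π, ξ ω₀ = a := by
  classical
  have := t2Space_orbits hact
  obtain ⟨U, hU, h0, hslice⟩ := exists_slice hact ω₀
  obtain ⟨K, hK, hK0, hKU⟩ := exists_compact_subset hU h0
  obtain ⟨f, hf1, hf0, -, hf⟩ := exists_continuous_one_zero_of_isCompact
    (isCompact_singleton (x := ω₀)) (isOpen_interior (s := K)).isClosed_compl
    (by simpa using hK0)
  have hfK : ∀ ω, ω ∉ K → f ω = 0 := fun ω hω => hf0 fun h => hω (interior_subset h)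
  have uniq : ∀ ω h k, act ω h ∈ U → act ω k ∈ U → h = k := by
    intro ω h k hh hk
    have := hslice _ hh (h⁻¹ * k) (by rwa [hact.act_mul, mul_inv_cancel_left])
    exact (inv_mul_eq_one.1 this)
  -- the finitely supported sum `∑_h f (ω • h) (h • a)`, through its only possibly nonzero term
  let F : Ω → A := fun ω =>
    if h : ∃ h, act ω h ∈ U then (f (act ω h.choose) : ℂ) • π h.choose a else 0
  have F1 : ∀ ω h, act ω h ∈ U → F ω = (f (act ω h) : ℂ) • π h a := by
    intro ω h hh
    have hex : ∃ h, act ω h ∈ U := ⟨h, hh⟩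
    have e := uniq ω _ h hex.choose_spec hh
    simp only [F, dif_pos hex]
    rw [e]
  have F0 : ∀ ω, (∀ h, act ω h ∉ K) → F ω = 0 := by
    intro ω hω
    by_cases hex : ∃ h, act ω h ∈ U
    · obtain ⟨h, hh⟩ := hex
      rw [F1 ω h hh, hfK _ (hω h), Complex.ofReal_zero, zero_smul]
    · simp only [F, dif_neg hex]
  have F0' : ∀ ω, Quot.mk (orbitRel act) ω ∉ Quot.mk (orbitRel act) '' K → F ω = 0 :=
    fun ω hω => F0 ω fun h hh => hω ⟨_, hh, mk_act ω h⟩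
  have hqK : IsCompact (Quot.mk (orbitRel act) '' K) := hK.image continuous_quot_mk
  have Fcont : Continuous F := by
    rw [continuous_iff_continuousAt]
    intro ω
    by_cases hω : Quot.mk (orbitRel act) ω ∈ Quot.mk (orbitRel act) '' K
    · obtain ⟨k, hk, e⟩ := hω
      obtain ⟨h, rfl⟩ := (mk_eq_mk_iff hact _ _).1 e.symm
      have hc : Continuous fun ω => (f (act ω h) : ℂ) • π h a :=
        (Complex.continuous_ofReal.comp (f.continuous.comp (hact.continuous_act h))).smul
          continuous_const
      refine hc.continuousAt.congr ?_
      filter_upwards [(hU.preimage (hact.continuous_act h)).mem_nhds (hKU hk)] with x hx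
      exact (F1 x h hx).symm
    · refine (continuousAt_const (y := (0 : A))).congr ?_
      filter_upwards [(hqK.isClosed.isOpen_compl.preimage continuous_quot_mk).mem_nhds hω]
        with x hx
      exact (F0' x hx).symm
  have Fbd : ∀ ω, ‖F ω‖ ≤ ‖a‖ := by
    intro ω
    by_cases hex : ∃ h, act ω h ∈ U
    · obtain ⟨h, hh⟩ := hex
      rw [F1 ω h hh, norm_smul, hπ.norm_map, Complex.norm_real, Real.norm_of_nonneg (hf _).1]
      exact mul_le_of_le_one_left (norm_nonneg _) (hf _).2
    · simp only [F, dif_neg hex, norm_zero, norm_nonneg]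
  refine ⟨BoundedContinuousFunction.ofNormedAddCommGroup F Fcont ‖a‖ Fbd,
    ⟨fun ω h => ?_, fun ε hε => ⟨_, hqK, fun ω hω => ?_⟩⟩, ?_⟩
  · change F (act ω h) = π h⁻¹ (F ω)
    by_cases hex : ∃ k, act ω k ∈ U
    · obtain ⟨k, hk⟩ := hex
      have e : act (act ω h) (h⁻¹ * k) = act ω k := by
        rw [hact.act_mul, mul_inv_cancel_left]
      rw [F1 ω k hk, F1 (act ω h) (h⁻¹ * k) (by rwa [e]), e, hπ.map_smul, hπ.act_mul]
    · rw [F0 ω fun k hk => hex ⟨k, hKU hk⟩, hπ.map_zero]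
      refine F0 _ fun k hk => hex ⟨h * k, ?_⟩
      rw [← hact.act_mul]
      exact hKU hk
  · change ‖F ω‖ < ε
    rwa [F0' ω hω, norm_zero]
  · change F ω₀ = a
    rw [F1 ω₀ 1 (by rwa [hact.act_one]), hact.act_one, hf1 rfl, hπ.act_one]
    simp

/-- For every `ω₀ ∈ Ω`, the evaluation map `ev : Ind_Ω A → A`, `ξ ↦ ξ(ω₀)`, is a surjective
bounded linear map of norm at most `1`, and its kernel is the closed linear span of the
functions `ω ↦ γ(q ω) ξ(ω)` with `γ ∈ C₀(Ω/H)` vanishing at `q(ω₀)` and `ξ ∈ Ind_Ω A`. -/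
theorem indSet_evaluation_fibre
    {H : Type*} [Group H] [TopologicalSpace H] [DiscreteTopology H]
    {Ω : Type*} [TopologicalSpace Ω] [LocallyCompactSpace Ω] [T2Space Ω]
    {A : Type*} [NormedAddCommGroup A] [NormedSpace ℂ A] [CompleteSpace A]
    (act : Ω → H → Ω) (hact : IsFreeProperAction act)
    (π : H → A → A) (hπ : IsIsometricAction π)
    (ω₀ : Ω) :
    (∀ ξ η : Ω →ᵇ A, (ξ + η) ω₀ = ξ ω₀ + η ω₀) ∧
    (∀ (c : ℂ) (ξ : Ω →ᵇ A), (c • ξ) ω₀ = c • ξ ω₀) ∧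
    (∀ a : A, ∃ ξ ∈ IndSet act π, ξ ω₀ = a) ∧
    (∀ ξ ∈ IndSet act π, ‖ξ ω₀‖ ≤ ‖ξ‖) ∧
    ({ξ : Ω →ᵇ A | ξ ∈ IndSet act π ∧ ξ ω₀ = 0} =
      closure (Submodule.span ℂ
        {ζ : Ω →ᵇ A | ∃ γ : C₀(Quot (orbitRel act), ℂ),
          γ (Quot.mk (orbitRel act) ω₀) = 0 ∧
          ∃ ξ ∈ IndSet act π, ∀ ω, ζ ω = γ (Quot.mk (orbitRel act) ω) • ξ ω} :
        Set (Ω →ᵇ A))) := by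
  refine ⟨fun _ _ => rfl, fun _ _ => rfl, exists_mem_indSet_eval_eq hact hπ ω₀,
    fun ξ _ => ξ.norm_coe_le_norm ω₀, Subset.antisymm ?_ ?_⟩
  · rintro ξ ⟨hξ, h0⟩
    refine Metric.mem_closure_iff.2 fun ε hε => ?_
    let γ := cutoff hπ ξ hξ (ε / 2) (half_pos hε)
    have hbd : ∀ ω, ‖γ (Quot.mk _ ω) • ξ ω‖ ≤ ‖ξ‖ := by
      intro ω
      rw [norm_smul]
      exact (mul_le_of_le_one_left (norm_nonneg _) (norm_cutoff_le hπ ξ hξ _ _ ω)).trans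
        (ξ.norm_coe_le_norm ω)
    have hc : Continuous fun ω => γ (Quot.mk _ ω) • ξ ω :=
      ((map_continuous γ).comp continuous_quot_mk).smul ξ.continuous
    refine ⟨BoundedContinuousFunction.ofNormedAddCommGroup _ hc ‖ξ‖ hbd,
      Submodule.subset_span ⟨γ, ?_, ξ, hξ, fun _ => rfl⟩, ?_⟩
    · simp [γ, cutoff_mk, h0]
    · refine lt_of_le_of_lt ?_ (half_lt_self hε)
      rw [BoundedContinuousFunction.dist_le (half_pos hε).le]
      intro ω
      rw [dist_eq_norm]
      exact norm_sub_cutoff_le hπ ξ hξ _ _ ω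
  · refine closure_minimal ?_ (isClosed_evalKer hπ ω₀)
    refine Submodule.span_le (p := evalKer act hπ ω₀).2 ?_
    rintro ζ ⟨γ, hγ, ξ, hξ, hζ⟩
    exact ⟨mul_mem_indSet hπ hξ γ ‖γ.toBCF‖ γ.toBCF.norm_coe_le_norm hζ, by
      rw [hζ, hγ, zero_smul]⟩
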